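/- arXiv:2001.06436 — 2 statements merged into one kernel-verified Lean document; each statement's English description precedes it below -/
import Mathlib

section
/- Let Γ and Ω be two non-parallel affine planes in ℝ³, let p be a point lying on neither plane, let f be the central projection from Γ to Ω through p, let l be the vanishing line of Γ and let m be the vanishing line of Ω. Then the image under f of each of the two open half-planes of Γ bounded by l is exactly one of the two open half-planes of Ω bounded by m. -/
noncomputable section

/-- Points of `ℝ³`. -/
abbrev E3 : Type := Fin 3 → ℝ

/-- An affine plane in `ℝ³`: a nonempty affine subspace whose direction has dimension 2. -/
def IsPlane (s : AffineSubspace ℝ E3) : Prop :=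
  (s : Set E3).Nonempty ∧ Module.finrank ℝ s.direction = 2

/-- `v` is a vanishing point of the plane `Γ` with respect to the central projection from
`Γ` to `Ω` through `p`: it lies in `Γ` and the line through `p` and `v` is parallel to `Ω`. -/
def VanishingPt (Γ Ω : AffineSubspace ℝ E3) (p v : E3) : Prop :=
  v ∈ Γ ∧ v -ᵥ p ∈ Ω.direction

/-- `f` is the central projection from `Γ` to `Ω` through `p`: every non-vanishing point
`a` of `Γ` is sent to the (unique) intersection point of the line through `p` and `a`
with `Ω`. -/
def IsCentralProj (Γ Ω : AffineSubspace ℝ E3) (p : E3) (f : E3 → E3) : Prop :=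
  ∀ a ∈ Γ, a -ᵥ p ∉ Ω.direction → f a ∈ Ω ∧ f a ∈ affineSpan ℝ {p, a}

/-!
Measure vectors from `p`, so that `Γ` is `φ = 1` and `Ω` is `ψ = 1` for two linear forms `φ` and
`ψ`; the vanishing lines are then cut out on `Γ` by `ψ = 0` and on `Ω` by `φ = 0`. On `Γ` minus its
vanishing line the projection divides by `ψ`, on `Ω` minus its vanishing line the projection back to
`Γ` divides by `φ`. These two continuous maps are mutually inverse, and a homeomorphism carries
connected components onto connected components.
-/

section ConnectedComponents

variable {X Y : Type*} [TopologicalSpace X] [TopologicalSpace Y]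

theorem image_connectedComponentIn_subset_of_mapsTo {f : X → Y} {s : Set X} {t : Set Y}
    (hf : ContinuousOn f s) (hst : Set.MapsTo f s t) {a : X} (ha : a ∈ s) :
    f '' connectedComponentIn s a ⊆ connectedComponentIn t (f a) :=
  (hf.image_connectedComponentIn_subset ha).trans
    (connectedComponentIn_mono _ hst.image_subset)

theorem partialEquiv_image_connectedComponentIn (e : PartialEquiv X Y)
    (he : ContinuousOn e e.source) (hes : ContinuousOn e.symm e.target) {a : X}
    (ha : a ∈ e.source) :
    e '' connectedComponentIn e.source a = connectedComponentIn e.target (e a) := by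
  refine (image_connectedComponentIn_subset_of_mapsTo he e.mapsTo ha).antisymm fun y hy => ?_
  have hback : e.symm y ∈ connectedComponentIn e.source a := by
    have := image_connectedComponentIn_subset_of_mapsTo hes e.mapsTo_symm (e.map_source ha)
      (Set.mem_image_of_mem _ hy)
    rwa [e.left_inv ha] at this
  exact ⟨e.symm y, hback, e.right_inv (connectedComponentIn_subset _ _ hy)⟩

end ConnectedComponents

section Algebra

open AffineMap

variable {𝕜 E P : Type*} [Field 𝕜] [AddCommGroup E] [Module 𝕜 E] [AddTorsor E P]

/-- An affine hyperplane of an affine space of arbitrary dimension: a nonempty affine subspace whose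
direction is a maximal proper subspace. -/
structure IsAffineHyperplane (s : AffineSubspace 𝕜 P) : Prop where
  nonempty : (s : Set P).Nonempty
  isCoatom_direction : IsCoatom s.direction

theorem IsAffineHyperplane.exists_dual {s : AffineSubspace 𝕜 P} (hs : IsAffineHyperplane s) {p : P}
    (hp : p ∉ s) :
    ∃ φ : Module.Dual 𝕜 E, LinearMap.ker φ = s.direction ∧ ∀ x, x ∈ s ↔ φ (x -ᵥ p) = 1 := by
  obtain ⟨q, hq⟩ := hs.nonempty
  have hqp : q -ᵥ p ∉ s.direction := (AffineSubspace.vsub_left_mem_direction_iff_mem hq p).not.2 hp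
  obtain ⟨φ, hφq, hle⟩ := Submodule.exists_le_ker_of_notMem hqp
  have hker : LinearMap.ker φ = s.direction :=
    (hs.isCoatom_direction.le_iff.1 hle).resolve_left fun h =>
      hφq (LinearMap.ker_eq_top.1 h ▸ LinearMap.zero_apply _)
  refine ⟨(φ (q -ᵥ p))⁻¹ • φ, by rw [LinearMap.ker_smul _ _ (inv_ne_zero hφq), hker], fun x => ?_⟩
  calc x ∈ s ↔ φ (x -ᵥ q) = 0 := by
        rw [← AffineSubspace.vsub_right_mem_direction_iff_mem hq, ← hker, LinearMap.mem_ker]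
    _ ↔ φ (x -ᵥ p) = φ (q -ᵥ p) := by
        rw [← vsub_sub_vsub_cancel_right x q p, map_sub, sub_eq_zero]
    _ ↔ ((φ (q -ᵥ p))⁻¹ • φ) (x -ᵥ p) = 1 := by
        rw [LinearMap.smul_apply, smul_eq_mul, inv_mul_eq_one₀ hφq, eq_comm]

/-- The central projection through `p` onto the hyperplane `ψ (x -ᵥ p) = 1`. The points with
`ψ (x -ᵥ p) = 0`, whose line through `p` is parallel to the hyperplane, get the junk value `p`. -/
def centralProj (ψ : Module.Dual 𝕜 E) (p x : P) : P :=
  lineMap p x (ψ (x -ᵥ p))⁻¹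

theorem map_centralProj_vsub (φ ψ : Module.Dual 𝕜 E) (p x : P) :
    φ (centralProj ψ p x -ᵥ p) = (ψ (x -ᵥ p))⁻¹ * φ (x -ᵥ p) := by
  rw [centralProj, lineMap_vsub_left, map_smul, smul_eq_mul]

theorem eq_centralProj_of_mem_affineSpan {ψ : Module.Dual 𝕜 E} {p x y : P}
    (hy : y ∈ line[𝕜, p, x]) (hψ : ψ (y -ᵥ p) = 1) : y = centralProj ψ p x := by
  obtain ⟨r, rfl⟩ := mem_affineSpan_pair_iff_exists_lineMap_eq.1 hy
  rw [lineMap_vsub_left, map_smul, smul_eq_mul] at hψ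
  rw [centralProj, eq_inv_of_mul_eq_one_left hψ]

theorem centralProj_centralProj {φ ψ : Module.Dual 𝕜 E} {p x : P} (hφ : φ (x -ᵥ p) = 1)
    (hψ : ψ (x -ᵥ p) ≠ 0) : centralProj φ p (centralProj ψ p x) = x := by
  rw [centralProj, map_centralProj_vsub, hφ, mul_one, inv_inv, centralProj, lineMap_apply,
    lineMap_vsub_left, smul_inv_smul₀ hψ, vsub_vadd]

theorem mapsTo_centralProj (φ ψ : Module.Dual 𝕜 E) (p : P) :
    Set.MapsTo (centralProj ψ p) {x | φ (x -ᵥ p) = 1 ∧ ψ (x -ᵥ p) ≠ 0}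
      {y | ψ (y -ᵥ p) = 1 ∧ φ (y -ᵥ p) ≠ 0} := by
  rintro x ⟨hφ, hψ⟩
  refine ⟨?_, ?_⟩
  · rw [map_centralProj_vsub, inv_mul_cancel₀ hψ]
  · rw [map_centralProj_vsub, hφ, mul_one]
    exact inv_ne_zero hψ

/-- The central projection through `p` as a bijection between the hyperplanes `φ (x -ᵥ p) = 1` and
`ψ (y -ᵥ p) = 1`, each with its vanishing points removed. -/
def centralProjEquiv (φ ψ : Module.Dual 𝕜 E) (p : P) : PartialEquiv P P where
  toFun := centralProj ψ p
  invFun := centralProj φ p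
  source := {x | φ (x -ᵥ p) = 1 ∧ ψ (x -ᵥ p) ≠ 0}
  target := {y | ψ (y -ᵥ p) = 1 ∧ φ (y -ᵥ p) ≠ 0}
  map_source' := mapsTo_centralProj φ ψ p
  map_target' := mapsTo_centralProj ψ φ p
  left_inv' _ hx := centralProj_centralProj hx.1 hx.2
  right_inv' _ hy := centralProj_centralProj hy.1 hy.2

end Algebra

section Topology

variable {𝕜 E P : Type*} [Field 𝕜] [TopologicalSpace 𝕜] [ContinuousInv₀ 𝕜] [AddCommGroup E]
  [Module 𝕜 E] [TopologicalSpace E] [ContinuousSMul 𝕜 E] [TopologicalSpace P] [AddTorsor E P]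
  [IsTopologicalAddTorsor P]

theorem continuousOn_centralProj {ψ : Module.Dual 𝕜 E} (hψ : Continuous ψ) (p : P) :
    ContinuousOn (centralProj ψ p) {x | ψ (x -ᵥ p) ≠ 0} :=
  have hψp : Continuous fun x : P => ψ (x -ᵥ p) := hψ.comp (by fun_prop)
  continuousOn_const.lineMap continuousOn_id (hψp.continuousOn.inv₀ fun _ hx => hx)

theorem centralProj_image_connectedComponentIn {φ ψ : Module.Dual 𝕜 E} (hφ : Continuous φ)
    (hψ : Continuous ψ) {p a : P} (hφa : φ (a -ᵥ p) = 1) (hψa : ψ (a -ᵥ p) ≠ 0) :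
    centralProj ψ p '' connectedComponentIn {x | φ (x -ᵥ p) = 1 ∧ ψ (x -ᵥ p) ≠ 0} a =
      connectedComponentIn {y | ψ (y -ᵥ p) = 1 ∧ φ (y -ᵥ p) ≠ 0} (centralProj ψ p a) :=
  partialEquiv_image_connectedComponentIn (centralProjEquiv φ ψ p)
    ((continuousOn_centralProj hψ p).mono fun _ hx => hx.2)
    ((continuousOn_centralProj hφ p).mono fun _ hy => hy.2) ⟨hφa, hψa⟩

end Topology

theorem centralProj_halfPlane_image_general {𝕜 E P : Type*} [NontriviallyNormedField 𝕜]
    [AddCommGroup E] [Module 𝕜 E] [TopologicalSpace E] [IsTopologicalAddGroup E]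
    [ContinuousSMul 𝕜 E] [TopologicalSpace P] [AddTorsor E P] [IsTopologicalAddTorsor P]
    {Γ Ω : AffineSubspace 𝕜 P} {p : P} {f : P → P} (hΓ : IsAffineHyperplane Γ)
    (hΩ : IsAffineHyperplane Ω)
    (hΓc : IsClosed (Γ.direction : Set E)) (hΩc : IsClosed (Ω.direction : Set E))
    (hpΓ : p ∉ Γ) (hpΩ : p ∉ Ω)
    (hf : ∀ a ∈ Γ, a -ᵥ p ∉ Ω.direction → f a ∈ Ω ∧ f a ∈ line[𝕜, p, a])
    {a : P} (ha : a ∈ Γ) (hap : a -ᵥ p ∉ Ω.direction) :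
    f '' connectedComponentIn {x | x ∈ Γ ∧ x -ᵥ p ∉ Ω.direction} a =
      connectedComponentIn {y | y ∈ Ω ∧ y -ᵥ p ∉ Γ.direction} (f a) := by
  obtain ⟨φ, hφker, hφ⟩ := hΓ.exists_dual hpΓ
  obtain ⟨ψ, hψker, hψ⟩ := hΩ.exists_dual hpΩ
  have hφc : Continuous φ := φ.continuous_of_isClosed_ker (hφker ▸ hΓc)
  have hψc : Continuous ψ := ψ.continuous_of_isClosed_ker (hψker ▸ hΩc)
  have hfproj : Set.EqOn f (centralProj ψ p) {x | x ∈ Γ ∧ x -ᵥ p ∉ Ω.direction} := fun x hx =>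
    have ⟨hfΩ, hfline⟩ := hf x hx.1 hx.2
    eq_centralProj_of_mem_affineSpan hfline ((hψ _).1 hfΩ)
  rw [(hfproj.mono (connectedComponentIn_subset _ _)).image_eq, hfproj ⟨ha, hap⟩]
  simp only [← hφker, ← hψker, LinearMap.mem_ker, hφ, hψ] at ha hap ⊢
  exact centralProj_image_connectedComponentIn hφc hψc ha hap

theorem isCoatom_of_finrank_add_one_eq {K V : Type*} [DivisionRing K] [AddCommGroup V] [Module K V]
    {W : Submodule K V} (hW : Module.finrank K W + 1 = Module.finrank K V) : IsCoatom W := by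
  have : FiniteDimensional K V := Module.finite_of_finrank_pos (by lia)
  refine ⟨fun h => ?_, fun U hWU => Submodule.eq_top_of_finrank_eq ?_⟩
  · rw [h, finrank_top] at hW
    lia
  · have hlt := Submodule.finrank_lt_finrank_of_lt hWU
    have hle := U.finrank_le
    lia

theorem IsPlane.isAffineHyperplane {s : AffineSubspace ℝ E3} (hs : IsPlane s) :
    IsAffineHyperplane s :=
  ⟨hs.1, isCoatom_of_finrank_add_one_eq (by rw [hs.2, Module.finrank_fin_fun])⟩

theorem mem_and_not_vanishingPt_iff {Γ Ω : AffineSubspace ℝ E3} {p x : E3} :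
    x ∈ Γ ∧ ¬ VanishingPt Γ Ω p x ↔ x ∈ Γ ∧ x -ᵥ p ∉ Ω.direction :=
  and_congr_right fun hx => not_congr (and_iff_right hx)

/-- The open half-planes of `Γ` bounded by its vanishing line `l` are the connected
components of `Γ \ l`; the central projection `f` maps each of them onto an open
half-plane of `Ω` bounded by the vanishing line `m` of `Ω`, namely onto a connected
component of `Ω \ m`. -/
theorem centralProj_halfPlane_image
    (Γ Ω : AffineSubspace ℝ E3) (p : E3) (f : E3 → E3)
    (hΓ : IsPlane Γ) (hΩ : IsPlane Ω)
    (hnp : Γ.direction ≠ Ω.direction)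
    (hpΓ : p ∉ Γ) (hpΩ : p ∉ Ω)
    (hf : IsCentralProj Γ Ω p f) :
    ∀ a : E3, a ∈ Γ → a -ᵥ p ∉ Ω.direction →
      f '' connectedComponentIn {x : E3 | x ∈ Γ ∧ ¬ VanishingPt Γ Ω p x} a =
        connectedComponentIn {y : E3 | y ∈ Ω ∧ ¬ VanishingPt Ω Γ p y} (f a) := by
  intro a ha hap
  simpa only [mem_and_not_vanishingPt_iff] using
    centralProj_halfPlane_image_general hΓ.isAffineHyperplane hΩ.isAffineHyperplane
      (Submodule.closed_of_finiteDimensional _) (Submodule.closed_of_finiteDimensional _)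
      hpΓ hpΩ hf ha hap
end
end

section
/- Let Γ and Ω be two non-parallel affine planes in ℝ³, let p be a point lying on neither plane, and let f be the central projection from Γ to Ω through p. Let a, b, c be points of Γ such that b lies strictly between a and c (i.e., b is in the open segment from a to c), and suppose that the closed segment from a to c contains no vanishing point of Γ. Then f(b) lies strictly between f(a) and f(c), and the closed segment from f(a) to f(c) contains no vanishing point of Ω. -/
noncomputable section

/-!
Take `p` as origin. An affine subspace missing the origin lies in a hyperplane `φ = 1`, and the
central projection onto it is `v ↦ (φ v)⁻¹ • v`. Let `φ = 1` on `Ω` and `ψ = 1` on `Γ`. A segment of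
`Γ` without vanishing points is one on which `φ` does not vanish, so `φ` has a constant sign there;
this makes the weights of the image of a convex combination nonnegative. For the image segment the
roles of `φ` and `ψ` are exchanged: on the image of `v ∈ Γ` the value of `ψ` is `(φ v)⁻¹`, so `ψ`
has the same sign at both endpoints. The projection is injective on `Γ` because projecting back
along `ψ` inverts it.
-/

section RadialProjection

variable {k V : Type*} [DivisionRing k] [AddCommGroup V] [Module k V]

/-- The central projection from the origin onto the hyperplane `φ = 1`. At the points of `φ = 0`,
where this projection is undefined, it takes the junk value `0`. -/
def radialProj (φ : V →ₗ[k] k) (v : V) : V :=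
  (φ v)⁻¹ • v

lemma map_radialProj_of_eq_one (φ : V →ₗ[k] k) {ψ : V →ₗ[k] k} {v : V} (hψ : ψ v = 1) :
    ψ (radialProj φ v) = (φ v)⁻¹ := by
  rw [radialProj, map_smul, hψ, smul_eq_mul, mul_one]

lemma radialProj_radialProj {φ ψ : V →ₗ[k] k} {v : V} (hφ : φ v ≠ 0) (hψ : ψ v = 1) :
    radialProj ψ (radialProj φ v) = v := by
  rw [radialProj, map_radialProj_of_eq_one φ hψ, inv_inv, radialProj, smul_inv_smul₀ hφ]

lemma radialProj_injOn (φ ψ : V →ₗ[k] k) : Set.InjOn (radialProj φ) {v | φ v ≠ 0 ∧ ψ v = 1} :=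
  Set.LeftInvOn.injOn (f₁' := radialProj ψ) fun _ hv => radialProj_radialProj hv.1 hv.2

variable {P : Type*} [AddTorsor V P]

lemma exists_linearMap_vsub_eq_one {S : AffineSubspace k P} {p : P} (hp : p ∉ S) :
    ∃ φ : V →ₗ[k] k, (∀ v ∈ S.direction, φ v = 0) ∧ ∀ x ∈ S, φ (x -ᵥ p) = 1 := by
  obtain rfl | ⟨q, hq⟩ := S.eq_bot_or_nonempty
  · exact ⟨0, fun _ _ => rfl, fun x hx => absurd hx (AffineSubspace.notMem_bot k V x)⟩
  have hqp : q -ᵥ p ∉ S.direction := by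
    rwa [← AffineSubspace.vsub_left_mem_direction_iff_mem hq] at hp
  obtain ⟨φ, hφ, hφq⟩ := LinearMap.exists_extend_of_notMem (0 : S.direction →ₗ[k] k) hqp 1
  have hφ_dir : ∀ v ∈ S.direction, φ v = 0 := fun v hv => congr($hφ ⟨v, hv⟩)
  refine ⟨φ, hφ_dir, fun x hx => ?_⟩
  rw [← vsub_add_vsub_cancel x q p, map_add, hφq,
    hφ_dir _ (AffineSubspace.vsub_mem_direction hx hq), zero_add]

lemma ne_zero_and_vsub_eq_radialProj_of_mem_line {φ : V →ₗ[k] k} {p x y : P}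
    (hy : y ∈ line[k, p, x]) (hφy : φ (y -ᵥ p) = 1) :
    φ (x -ᵥ p) ≠ 0 ∧ y -ᵥ p = radialProj φ (x -ᵥ p) := by
  obtain ⟨t, rfl⟩ := mem_affineSpan_pair_iff_exists_lineMap_eq.1 hy
  rw [AffineMap.lineMap_vsub_left] at hφy ⊢
  rw [map_smul, smul_eq_mul] at hφy
  exact ⟨right_ne_zero_of_mul_eq_one hφy, by rw [radialProj, eq_inv_of_mul_eq_one_left hφy]⟩

end RadialProjection

section Betweenness

lemma zero_notMem_uIcc_iff_mul_pos {R : Type*} [Ring R] [LinearOrder R] [IsStrictOrderedRing R]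
    {x y : R} : 0 ∉ Set.uIcc x y ↔ 0 < x * y := by
  rw [Set.mem_uIcc, mul_pos_iff]
  grind

variable {k V : Type*} [Field k] [LinearOrder k] [IsStrictOrderedRing k] [AddCommGroup V]
  [Module k V] {φ ψ : V →ₗ[k] k} {a b c : V}

lemma forall_mem_segment_map_ne_zero_iff :
    (∀ v ∈ segment k a c, φ v ≠ 0) ↔ 0 < φ a * φ c := by
  rw [← zero_notMem_uIcc_iff_mul_pos, ← segment_eq_uIcc, ← LinearMap.coe_toAffineMap,
    ← image_segment]
  simp

lemma map_div_map_pos_of_mem_segment {v w : V} (hφ : ∀ u ∈ segment k a c, φ u ≠ 0)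
    (hv : v ∈ segment k a c) (hw : w ∈ segment k a c) : 0 < φ v / φ w := by
  have hvw : 0 < φ v * φ w := forall_mem_segment_map_ne_zero_iff.1 fun u hu =>
    hφ u ((convex_segment a c).segment_subset hv hw hu)
  rwa [div_pos_iff, ← mul_pos_iff]

lemma wbtw_radialProj (hφ : ∀ v ∈ segment k a c, φ v ≠ 0) (hb : Wbtw k a b c) :
    Wbtw k (radialProj φ a) (radialProj φ b) (radialProj φ c) := by
  have hφb : φ b ≠ 0 := hφ b hb.mem_segment
  have hφa : φ a ≠ 0 := hφ a (left_mem_segment k a c)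
  have hφc : φ c ≠ 0 := hφ c (right_mem_segment k a c)
  have hab : 0 < φ a / φ b := map_div_map_pos_of_mem_segment hφ
    (left_mem_segment k a c) hb.mem_segment
  have hcb : 0 < φ c / φ b := map_div_map_pos_of_mem_segment hφ
    (right_mem_segment k a c) hb.mem_segment
  obtain ⟨s, t, hs, ht, -, hst⟩ := hb.mem_segment
  have hφst : s * φ a + t * φ c = φ b := by
    rw [← hst, map_add, map_smul, map_smul, smul_eq_mul, smul_eq_mul]
  refine mem_segment_iff_wbtw.1
    ⟨s * (φ a / φ b), t * (φ c / φ b), mul_nonneg hs hab.le, mul_nonneg ht hcb.le, ?_, ?_⟩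
  · rw [mul_div_assoc', mul_div_assoc', ← add_div, hφst, div_self hφb]
  · rw [radialProj, radialProj, radialProj, ← hst]
    match_scalars <;> field_simp

lemma sbtw_radialProj (hφ : ∀ v ∈ segment k a c, φ v ≠ 0) (ha : ψ a = 1) (hb : ψ b = 1)
    (hc : ψ c = 1) (habc : Sbtw k a b c) :
    Sbtw k (radialProj φ a) (radialProj φ b) (radialProj φ c) := by
  have hφa := hφ a (left_mem_segment k a c)
  have hφb := hφ b habc.wbtw.mem_segment
  have hφc := hφ c (right_mem_segment k a c)
  have hinj := radialProj_injOn φ ψ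
  exact ⟨wbtw_radialProj hφ habc.wbtw, hinj.ne ⟨hφb, hb⟩ ⟨hφa, ha⟩ habc.ne_left,
    hinj.ne ⟨hφb, hb⟩ ⟨hφc, hc⟩ habc.ne_right⟩

lemma map_ne_zero_of_mem_segment_radialProj (hφ : ∀ v ∈ segment k a c, φ v ≠ 0) (ha : ψ a = 1)
    (hc : ψ c = 1) : ∀ v ∈ segment k (radialProj φ a) (radialProj φ c), ψ v ≠ 0 := by
  rw [forall_mem_segment_map_ne_zero_iff] at hφ ⊢
  rw [map_radialProj_of_eq_one φ ha, map_radialProj_of_eq_one φ hc, ← mul_inv]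
  exact inv_pos.2 hφ

end Betweenness

theorem centralProj_between_general {k V P : Type*} [Field k] [LinearOrder k]
    [IsStrictOrderedRing k] [AddCommGroup V] [Module k V] [AddTorsor V P]
    {Γ Ω : AffineSubspace k P} {p : P} {f : P → P} (hpΓ : p ∉ Γ) (hpΩ : p ∉ Ω)
    (hf : ∀ x ∈ Γ, x -ᵥ p ∉ Ω.direction → f x ∈ Ω ∧ f x ∈ line[k, p, x])
    {a b c : P} (ha : a ∈ Γ) (hc : c ∈ Γ) (habc : Sbtw k a b c)
    (hnv : ∀ x, Wbtw k a x c → x -ᵥ p ∉ Ω.direction) :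
    Sbtw k (f a) (f b) (f c) ∧ ∀ y, Wbtw k (f a) y (f c) → y -ᵥ p ∉ Γ.direction := by
  obtain ⟨φ, -, hφ⟩ := exists_linearMap_vsub_eq_one hpΩ
  obtain ⟨ψ, hψ_dir, hψ⟩ := exists_linearMap_vsub_eq_one hpΓ
  have hΓ : ∀ {x}, Wbtw k a x c → x ∈ Γ := fun hx =>
    affineSpan_pair_le_of_mem_of_mem ha hc hx.mem_affineSpan
  have hproj : ∀ {x}, Wbtw k a x c →
      φ (x -ᵥ p) ≠ 0 ∧ f x -ᵥ p = radialProj φ (x -ᵥ p) := by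
    intro x hx
    obtain ⟨hfΩ, hfline⟩ := hf x (hΓ hx) (hnv x hx)
    exact ne_zero_and_vsub_eq_radialProj_of_mem_line hfline (hφ _ hfΩ)
  have hfa := (hproj (wbtw_self_left k a c)).2
  have hfb := (hproj habc.wbtw).2
  have hfc := (hproj (wbtw_self_right k a c)).2
  have hφ_ne : ∀ v ∈ segment k (a -ᵥ p) (c -ᵥ p), φ v ≠ 0 := by
    intro v hv
    rw [mem_segment_iff_wbtw, ← vadd_vsub v p, wbtw_vsub_const_iff] at hv
    simpa only [vadd_vsub] using (hproj hv).1
  constructor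
  · rw [← sbtw_vsub_const_iff p, hfa, hfb, hfc]
    exact sbtw_radialProj hφ_ne (hψ a ha) (hψ b (hΓ habc.wbtw)) (hψ c hc)
      ((sbtw_vsub_const_iff p).2 habc)
  · intro y hy hyΓ
    rw [← wbtw_vsub_const_iff p, hfa, hfc] at hy
    exact map_ne_zero_of_mem_segment_radialProj hφ_ne (hψ a ha) (hψ c hc) _ hy.mem_segment
      (hψ_dir _ hyΓ)

/-- If `b` lies strictly between `a` and `c` in `Γ` and the closed segment from `a` to `c`
contains no vanishing point of `Γ`, then `f b` lies strictly between `f a` and `f c`, and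
the closed segment from `f a` to `f c` contains no vanishing point of `Ω`. -/
theorem centralProj_between
    (Γ Ω : AffineSubspace ℝ E3) (p : E3) (f : E3 → E3)
    (hΓ : IsPlane Γ) (hΩ : IsPlane Ω)
    (hnp : Γ.direction ≠ Ω.direction)
    (hpΓ : p ∉ Γ) (hpΩ : p ∉ Ω)
    (hf : IsCentralProj Γ Ω p f)
    (a b c : E3) (ha : a ∈ Γ) (hb : b ∈ Γ) (hc : c ∈ Γ)
    (hbtw : Sbtw ℝ a b c)
    (hnv : ∀ x ∈ segment ℝ a c, ¬ VanishingPt Γ Ω p x) :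
    Sbtw ℝ (f a) (f b) (f c) ∧
      ∀ y ∈ segment ℝ (f a) (f c), ¬ VanishingPt Ω Γ p y := by
  obtain ⟨hf_btw, hf_nv⟩ := centralProj_between_general hpΓ hpΩ hf ha hc hbtw fun x hx hxΩ =>
    hnv x hx.mem_segment ⟨affineSpan_pair_le_of_mem_of_mem ha hc hx.mem_affineSpan, hxΩ⟩
  exact ⟨hf_btw, fun y hy hyv => hf_nv y (mem_segment_iff_wbtw.1 hy) hyv.2⟩
end
end
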